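/- arXiv:1212.3462 — 2 statements merged into one kernel-verified Lean document; each statement's English description precedes it below -/
import Mathlib

section
/- For all f, g in the algebra 𝒜, the weight ω(f) = ∫_{ℝ²} f(x) d²x satisfies the twisted trace property ω(f ⋆ g) = ω((ℰ▷g) ⋆ f), where (ℰ▷g)(x) = g(x₀ + iλ, x₁). -/
open MeasureTheory Complex

/-- Fourier transform in the first variable:
(𝓕₀f)(p₀, x₁) = ∫ e^{-ip₀y₀} f(y₀, x₁) dy₀. -/
noncomputable def F0 (f : ℝ × ℝ → ℂ) : ℝ × ℝ → ℂ :=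
  fun p => ∫ y0 : ℝ, Complex.exp (-Complex.I * (p.1 : ℂ) * (y0 : ℂ)) * f (y0, p.2)

/-- The deformed (star) product of κ-Minkowski:
(f ⋆ g)(x) = (2π)⁻¹ ∫ e^{ip₀x₀} (𝓕₀f)(p₀,x₁) g(x₀, e^{-λp₀}x₁) dp₀. -/
noncomputable def sprod (lam : ℝ) (f g : ℝ × ℝ → ℂ) : ℝ × ℝ → ℂ :=
  fun x => (2 * Real.pi)⁻¹ • ∫ p0 : ℝ,
    Complex.exp (Complex.I * (p0 : ℂ) * (x.1 : ℂ)) * F0 f (p0, x.2)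
      * g (x.1, Real.exp (-lam * p0) * x.2)

/-- The deformed involution:
f*(x) = (2π)⁻¹ ∫ e^{ip₀x₀} (𝓕₀ conj f)(p₀, e^{-λp₀}x₁) dp₀. -/
noncomputable def sinv (lam : ℝ) (f : ℝ × ℝ → ℂ) : ℝ × ℝ → ℂ :=
  fun x => (2 * Real.pi)⁻¹ • ∫ p0 : ℝ,
    Complex.exp (Complex.I * (p0 : ℂ) * (x.1 : ℂ))
      * F0 (fun y => (starRingEnd ℂ) (f y)) (p0, Real.exp (-lam * p0) * x.2)

/-- Membership in the algebra 𝒜 = 𝓕(𝒮_c): f is the Fourier transform of a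
Schwartz function with compact support in the first variable. -/
def InA (f : ℝ × ℝ → ℂ) : Prop :=
  ∃ h : SchwartzMap (ℝ × ℝ) ℂ,
    (∃ R : ℝ, ∀ p : ℝ × ℝ, R < |p.1| → h p = 0) ∧
    ∀ x : ℝ × ℝ, f x = (2 * Real.pi)⁻¹ • ∫ p : ℝ × ℝ,
      Complex.exp (Complex.I * ((p.1 : ℂ) * (x.1 : ℂ) + (p.2 : ℂ) * (x.2 : ℂ))) * h p

/-- The invariant weight ω(f) = ∫ f(x) d²x. -/
noncomputable def omegaW (f : ℝ × ℝ → ℂ) : ℂ := ∫ x : ℝ × ℝ, f x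

/-- Joint quadratic decay in both variables, in product form. -/
def ProdDecay (f : ℝ × ℝ → ℂ) : Prop :=
  ∃ C : ℝ, ∀ x : ℝ × ℝ, ‖f x‖ ≤ C * ((1 + x.1 ^ 2)⁻¹ * (1 + x.2 ^ 2)⁻¹)

/-- The partial Fourier transform in the second variable. -/
noncomputable def partialFourier (h : ℝ × ℝ → ℂ) : ℝ × ℝ → ℂ :=
  fun p => ∫ p1 : ℝ, Complex.exp (Complex.I * ((p1 : ℂ) * (p.2 : ℂ))) * h (p.1, p1)

theorem norm_exp_I_mul_ofReal_mul (a b : ℝ) :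
    ‖Complex.exp (Complex.I * ((a : ℂ) * (b : ℂ)))‖ = 1 := by
  rw [Complex.norm_exp]; simp

theorem SchwartzMap.prodDecay (h : SchwartzMap (ℝ × ℝ) ℂ) : ProdDecay h := by
  refine ⟨2 ^ 4 * (Finset.Iic (4, 0)).sup (fun m => SchwartzMap.seminorm ℝ m.1 m.2) h,
    fun x => ?_⟩
  have key := SchwartzMap.one_add_le_sup_seminorm_apply (𝕜 := ℝ) (m := (4, 0)) (k := 4) (n := 0)
    le_rfl le_rfl h x
  simp only [norm_iteratedFDeriv_zero] at key
  rw [← mul_inv, ← div_eq_mul_inv, le_div_iff₀ (by positivity), mul_comm]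
  refine le_trans ?_ key
  gcongr
  have h1 : |x.1| ≤ ‖x‖ := norm_fst_le x
  have h2 : |x.2| ≤ ‖x‖ := norm_snd_le x
  have sq_bound : ∀ t : ℝ, |t| ≤ ‖x‖ → 1 + t ^ 2 ≤ (1 + ‖x‖) ^ 2 := by
    intro t ht
    nlinarith [sq_abs t, abs_nonneg t]
  calc (1 + x.1 ^ 2) * (1 + x.2 ^ 2) ≤ (1 + ‖x‖) ^ 2 * (1 + ‖x‖) ^ 2 := by
        gcongr
        · exact sq_bound _ h1
        · exact sq_bound _ h2
    _ = (1 + ‖x‖) ^ 4 := by ring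

theorem ProdDecay.exists_nonneg {f : ℝ × ℝ → ℂ} (hf : ProdDecay f) :
    ∃ C : ℝ, 0 ≤ C ∧ ∀ x : ℝ × ℝ, ‖f x‖ ≤ C * ((1 + x.1 ^ 2)⁻¹ * (1 + x.2 ^ 2)⁻¹) := by
  obtain ⟨C, hC⟩ := hf
  exact ⟨|C|, abs_nonneg C, fun x => (hC x).trans (by gcongr; exact le_abs_self C)⟩

theorem inv_one_add_sq_le_one (t : ℝ) : (1 + t ^ 2)⁻¹ ≤ 1 :=
  inv_le_one_of_one_le₀ (by nlinarith [sq_nonneg t])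

theorem ProdDecay.exists_fst_bound {f : ℝ × ℝ → ℂ} (hf : ProdDecay f) :
    ∃ C : ℝ, 0 ≤ C ∧ ∀ x : ℝ × ℝ, ‖f x‖ ≤ C * (1 + x.1 ^ 2)⁻¹ := by
  obtain ⟨C, h0, hC⟩ := hf.exists_nonneg
  refine ⟨C, h0, fun x => (hC x).trans ?_⟩
  have := inv_one_add_sq_le_one x.2
  gcongr
  exact mul_le_of_le_one_right (by positivity) this

theorem ProdDecay.exists_snd_bound {f : ℝ × ℝ → ℂ} (hf : ProdDecay f) :
    ∃ C : ℝ, 0 ≤ C ∧ ∀ x : ℝ × ℝ, ‖f x‖ ≤ C * (1 + x.2 ^ 2)⁻¹ := by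
  obtain ⟨C, h0, hC⟩ := hf.exists_nonneg
  refine ⟨C, h0, fun x => (hC x).trans ?_⟩
  have := inv_one_add_sq_le_one x.1
  gcongr
  exact mul_le_of_le_one_left (by positivity) this

theorem ProdDecay.integrable {f : ℝ × ℝ → ℂ} (hf : ProdDecay f) (hc : Continuous f) :
    Integrable f := by
  obtain ⟨C, hC⟩ := hf
  exact ((integrable_inv_one_add_sq.mul_prod integrable_inv_one_add_sq).const_mul C).mono'
    hc.aestronglyMeasurable (.of_forall hC)

theorem ProdDecay.integrable_fst {f : ℝ × ℝ → ℂ} (hf : ProdDecay f) (hc : Continuous f)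
    (x1 : ℝ) : Integrable fun x0 => f (x0, x1) := by
  obtain ⟨C, -, hC⟩ := hf.exists_fst_bound
  exact (integrable_inv_one_add_sq.const_mul C).mono'
    (by fun_prop) (.of_forall fun x => hC (x, x1))

theorem partialFourier_continuous {h : ℝ × ℝ → ℂ} (hd : ProdDecay h) (hc : Continuous h) :
    Continuous (partialFourier h) := by
  obtain ⟨C, -, hC⟩ := hd.exists_snd_bound
  refine continuous_of_dominated (bound := fun p1 => C * (1 + p1 ^ 2)⁻¹) (fun p => ?_)
    (fun p => .of_forall fun p1 => ?_) (integrable_inv_one_add_sq.const_mul C)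
    (.of_forall fun p1 => by fun_prop)
  · exact Continuous.aestronglyMeasurable (by fun_prop)
  · rw [norm_mul, norm_exp_I_mul_ofReal_mul, one_mul]
    exact hC (p.1, p1)

theorem exists_norm_partialFourier_le {h : ℝ × ℝ → ℂ} (hd : ProdDecay h) :
    ∃ C : ℝ, ∀ p, ‖partialFourier h p‖ ≤ C * (1 + p.1 ^ 2)⁻¹ := by
  obtain ⟨C, -, hC⟩ := hd.exists_nonneg
  refine ⟨C * ∫ t : ℝ, (1 + t ^ 2)⁻¹, fun p => ?_⟩
  calc ‖partialFourier h p‖ ≤ ∫ p1 : ℝ, C * (1 + p.1 ^ 2)⁻¹ * (1 + p1 ^ 2)⁻¹ := by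
        refine norm_integral_le_of_norm_le (integrable_inv_one_add_sq.const_mul _)
          (.of_forall fun p1 => ?_)
        rw [norm_mul, norm_exp_I_mul_ofReal_mul, one_mul, mul_assoc]
        exact hC (p.1, p1)
    _ = _ := by rw [integral_const_mul]; ring

theorem integrable_partialFourier_fst {h : ℝ × ℝ → ℂ} (hd : ProdDecay h) (hc : Continuous h)
    (x1 : ℝ) : Integrable fun p0 => partialFourier h (p0, x1) := by
  obtain ⟨C, hC⟩ := exists_norm_partialFourier_le hd
  have := partialFourier_continuous hd hc
  exact (integrable_inv_one_add_sq.const_mul C).mono'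
    (Continuous.aestronglyMeasurable (by fun_prop)) (.of_forall fun p0 => hC (p0, x1))

theorem F0_continuous {f : ℝ × ℝ → ℂ} (hd : ProdDecay f) (hc : Continuous f) :
    Continuous (F0 f) := by
  obtain ⟨C, -, hC⟩ := hd.exists_fst_bound
  refine continuous_of_dominated (bound := fun y => C * (1 + y ^ 2)⁻¹) (fun p => ?_)
    (fun p => .of_forall fun y => ?_) (integrable_inv_one_add_sq.const_mul C)
    (.of_forall fun y => by fun_prop)
  · exact Continuous.aestronglyMeasurable (by fun_prop)
  · rw [norm_mul, Complex.norm_exp]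
    simpa using hC (y, p.2)

theorem exists_norm_F0_le {f : ℝ × ℝ → ℂ} (hd : ProdDecay f) :
    ∃ C : ℝ, ∀ p, ‖F0 f p‖ ≤ C * (1 + p.2 ^ 2)⁻¹ := by
  obtain ⟨C, -, hC⟩ := hd.exists_nonneg
  refine ⟨C * ∫ t : ℝ, (1 + t ^ 2)⁻¹, fun p => ?_⟩
  calc ‖F0 f p‖ ≤ ∫ y : ℝ, C * (1 + p.2 ^ 2)⁻¹ * (1 + y ^ 2)⁻¹ := by
        refine norm_integral_le_of_norm_le (integrable_inv_one_add_sq.const_mul _)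
          (.of_forall fun y => ?_)
        rw [norm_mul, Complex.norm_exp]
        have := hC (y, p.2)
        simp only [mul_comm (1 + y ^ 2)⁻¹] at this
        simpa [mul_assoc] using this
    _ = _ := by rw [integral_const_mul]; ring

/-- The function on position space whose momentum-space amplitude is `h`. -/
noncomputable def planeWaves (h : ℝ × ℝ → ℂ) : ℝ × ℝ → ℂ :=
  fun x => (2 * Real.pi)⁻¹ • ∫ p : ℝ × ℝ,
    Complex.exp (Complex.I * ((p.1 : ℂ) * (x.1 : ℂ) + (p.2 : ℂ) * (x.2 : ℂ))) * h p

theorem exists_schwartzMap_eq_planeWaves (h : SchwartzMap (ℝ × ℝ) ℂ) :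
    ∃ G : SchwartzMap (ℝ × ℝ) ℂ, planeWaves h = G := by
  have hpi : (2 * Real.pi)⁻¹ ≠ 0 := by positivity
  let H : SchwartzMap ℂ ℂ :=
    SchwartzMap.compCLMOfContinuousLinearEquiv ℝ Complex.equivRealProdCLM h
  let e : (ℝ × ℝ) ≃L[ℝ] ℂ := Complex.equivRealProdCLM.symm.trans
    (ContinuousLinearEquiv.smulLeft (Units.mk0 (2 * Real.pi)⁻¹ hpi))
  refine ⟨(2 * Real.pi)⁻¹ • SchwartzMap.compCLMOfContinuousLinearEquiv ℝ e
    (FourierTransformInv.fourierInv H), funext fun x => ?_⟩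
  simp only [planeWaves, smul_apply, SchwartzMap.compCLMOfContinuousLinearEquiv_apply,
    Function.comp_apply, SchwartzMap.fourierInv_coe]
  congr 1
  rw [Real.fourierInv_eq', ← Complex.volume_preserving_equiv_real_prod.integral_comp
    Complex.measurableEquivRealProd.measurableEmbedding]
  refine integral_congr_ae (.of_forall fun v => ?_)
  simp only [smul_eq_mul]
  congr 2
  · have he : e x = (2 * Real.pi)⁻¹ • (Complex.equivRealProdCLM.symm x) := rfl
    rw [he, real_inner_smul_right, Complex.inner]
    simp
    field_simp

theorem planeWaves_prodDecay (h : SchwartzMap (ℝ × ℝ) ℂ) : ProdDecay (planeWaves h) := by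
  obtain ⟨G, hG⟩ := exists_schwartzMap_eq_planeWaves h
  exact hG ▸ G.prodDecay

theorem planeWaves_continuous (h : SchwartzMap (ℝ × ℝ) ℂ) : Continuous (planeWaves h) := by
  obtain ⟨G, hG⟩ := exists_schwartzMap_eq_planeWaves h
  exact hG ▸ G.continuous

theorem planeWaves_eq_integral_partialFourier (h : SchwartzMap (ℝ × ℝ) ℂ) (x : ℝ × ℝ) :
    planeWaves h x = (2 * Real.pi)⁻¹ • ∫ p0 : ℝ,
      Complex.exp (Complex.I * ((p0 : ℂ) * (x.1 : ℂ))) * partialFourier h (p0, x.2) := by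
  rw [planeWaves]
  congr 1
  have hc := h.continuous
  have hint : Integrable fun p : ℝ × ℝ =>
      Complex.exp (Complex.I * ((p.1 : ℂ) * (x.1 : ℂ) + (p.2 : ℂ) * (x.2 : ℂ))) * h p := by
    refine (h.prodDecay.integrable hc).norm.mono'
      (Continuous.aestronglyMeasurable (by fun_prop)) (.of_forall fun p => ?_)
    rw [norm_mul, Complex.norm_exp]
    simp
  rw [Measure.volume_eq_prod, integral_prod _ hint]
  refine integral_congr_ae (.of_forall fun p0 => ?_)
  simp only [partialFourier]
  rw [← integral_const_mul]
  refine integral_congr_ae (.of_forall fun p1 => ?_)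
  simp only
  rw [← mul_assoc, ← Complex.exp_add]
  ring_nf

theorem F0_planeWaves (h : SchwartzMap (ℝ × ℝ) ℂ) : F0 (planeWaves h) = partialFourier h := by
  ext ⟨q, x1⟩
  have hc := h.continuous
  have hpc := partialFourier_continuous h.prodDecay hc
  let φ : ℝ → ℂ := fun p0 => partialFourier h (p0, x1)
  have hφc : Continuous φ := by fun_prop
  have hφi : Integrable φ := integrable_partialFourier_fst h.prodDecay hc x1
  have hinv : ∀ w : ℝ, FourierTransformInv.fourierInv φ w
      = (2 * Real.pi) • planeWaves h (2 * Real.pi * w, x1) := by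
    intro w
    rw [planeWaves_eq_integral_partialFourier, smul_smul, mul_inv_cancel₀ (by positivity),
      one_smul, Real.fourierInv_eq']
    refine integral_congr_ae (.of_forall fun v => ?_)
    simp [φ]
    ring_nf
    simp
  have hFi : Integrable (FourierTransform.fourier φ) := by
    have h1 : Integrable fun y : ℝ => planeWaves h (y, x1) :=
      (planeWaves_prodDecay h).integrable_fst (planeWaves_continuous h) x1
    have h2 := ((h1.comp_mul_left' (R := 2 * Real.pi) (by positivity)).comp_neg).smul (2 * Real.pi)
    refine h2.congr (.of_forall fun w => ?_)
    have := hinv (-w)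
    rw [Real.fourierInv_eq_fourier_neg, neg_neg] at this
    simpa using this.symm
  have key := hφi.fourier_fourierInv_eq hFi (v := q) hφc.continuousAt
  rw [show partialFourier h (q, x1) = φ q from rfl, ← key, Real.fourier_eq', F0]
  have hsub := Measure.integral_comp_mul_left
    (fun y0 : ℝ => Complex.exp (-Complex.I * (q : ℂ) * (y0 : ℂ)) * planeWaves h (y0, x1))
    (2 * Real.pi)
  rw [abs_of_pos (by positivity), eq_inv_smul_iff₀ (by positivity)] at hsub
  simp only [← hsub]
  rw [← integral_smul]
  refine integral_congr_ae (.of_forall fun w => ?_)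
  simp only [hinv]
  simp
  ring_nf

theorem F0_planeWaves_eq_zero {h : SchwartzMap (ℝ × ℝ) ℂ} {R : ℝ}
    (hR : ∀ p : ℝ × ℝ, R < |p.1| → h p = 0) {p : ℝ × ℝ} (hp : R < |p.1|) :
    F0 (planeWaves h) p = 0 := by
  rw [F0_planeWaves, partialFourier]
  simp [fun p1 : ℝ => hR (p.1, p1) hp]

/-- The weight of a product as an integral over momentum space. -/
theorem omegaW_sprod {lam : ℝ} {f g : ℝ × ℝ → ℂ} {R : ℝ}
    (hfd : ProdDecay f) (hfc : Continuous f) (hgd : ProdDecay g) (hgc : Continuous g)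
    (hR : ∀ p : ℝ × ℝ, R < |p.1| → F0 f p = 0) :
    omegaW (sprod lam f g) = (2 * Real.pi)⁻¹ • ∫ p0 : ℝ, ∫ x1 : ℝ,
      F0 f (p0, x1) * F0 g (-p0, Real.exp (-lam * p0) * x1) := by
  have hFc := F0_continuous hfd hfc
  obtain ⟨A, hA⟩ := exists_norm_F0_le hfd
  obtain ⟨B, hB0, hB⟩ := hgd.exists_fst_bound
  let K : ℝ × ℝ → ℝ → ℂ := fun x p0 =>
    Complex.exp (Complex.I * (p0 : ℂ) * (x.1 : ℂ)) * F0 f (p0, x.2)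
      * g (x.1, Real.exp (-lam * p0) * x.2)
  have hKc : Continuous (Function.uncurry K) := by
    simp only [Function.uncurry_def, K]
    fun_prop
  have hKb : ∀ x p0, ‖K x p0‖ ≤ (B * (1 + x.1 ^ 2)⁻¹) * (A * (1 + x.2 ^ 2)⁻¹) := by
    intro x p0
    have h1 : ‖Complex.exp (Complex.I * (p0 : ℂ) * (x.1 : ℂ))‖ = 1 := by
      rw [mul_assoc, norm_exp_I_mul_ofReal_mul]
    simp only [K, norm_mul, h1, one_mul]
    rw [mul_comm]
    exact mul_le_mul (hB _) (hA (p0, x.2)) (norm_nonneg _) (by positivity)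
  have hbi : Integrable fun x : ℝ × ℝ => (B * (1 + x.1 ^ 2)⁻¹) * (A * (1 + x.2 ^ 2)⁻¹) :=
    (integrable_inv_one_add_sq.const_mul B).mul_prod (integrable_inv_one_add_sq.const_mul A)
  have hKi : Integrable (Function.uncurry K) (volume.prod volume) := by
    have hind : Integrable ((Set.Icc (-R) R).indicator fun _ : ℝ => (1 : ℝ)) :=
      (integrable_indicator_iff measurableSet_Icc).2 (by simp)
    refine (hbi.mul_prod hind).mono' hKc.aestronglyMeasurable (.of_forall fun ⟨x, p0⟩ => ?_)
    by_cases hp : p0 ∈ Set.Icc (-R) R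
    · simpa [hp] using hKb x p0
    · have : R < |p0| := by
        by_contra hlt
        exact hp (abs_le.1 (not_lt.1 hlt))
      simp [hp, K, hR (p0, x.2) this]
  have hKx : ∀ p0, Integrable fun x => K x p0 := fun p0 =>
    hbi.mono' (hKc.comp (by fun_prop : Continuous fun x : ℝ × ℝ => (x, p0))).aestronglyMeasurable
      (.of_forall fun x => hKb x p0)
  simp only [omegaW, sprod]
  rw [integral_smul]
  congr 1
  rw [integral_integral_swap hKi]
  refine integral_congr_ae (.of_forall fun p0 => ?_)
  simp only
  rw [Measure.volume_eq_prod, integral_prod_symm _ (hKx p0)]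
  refine integral_congr_ae (.of_forall fun x1 => ?_)
  simp only [K, F0]
  rw [← integral_const_mul]
  refine integral_congr_ae (.of_forall fun x0 => ?_)
  push_cast
  rw [show Complex.I * (p0 : ℂ) * x0 = -Complex.I * -(p0 : ℂ) * x0 by ring]
  ring

theorem exists_schwartzMap_exp_mul (lam : ℝ) (h : SchwartzMap (ℝ × ℝ) ℂ) {R : ℝ}
    (hR : ∀ p : ℝ × ℝ, R < |p.1| → h p = 0) :
    ∃ k : SchwartzMap (ℝ × ℝ) ℂ, ∀ p, k p = Complex.exp (-(lam * p.1 : ℂ)) * h p := by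
  let b : ContDiffBump (0 : ℝ) := ⟨|R| + 1, |R| + 2, by positivity, by linarith⟩
  let u : ℝ → ℂ := fun t => (b t : ℂ) * Complex.exp (-(lam * t : ℂ))
  have hus : ContDiff ℝ (⊤ : ℕ∞) u := by
    refine (Complex.ofRealCLM.contDiff.comp b.contDiff).mul (ContDiff.cexp ?_)
    exact (contDiff_const.mul Complex.ofRealCLM.contDiff).neg
  have huc : HasCompactSupport u := by
    refine HasCompactSupport.mul_right ?_
    exact b.hasCompactSupport.comp_left (g := Complex.ofReal) Complex.ofReal_zero
  have hut : Function.HasTemperateGrowth fun p : ℝ × ℝ => u p.1 :=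
    (huc.toSchwartzMap hus).hasTemperateGrowth.comp
      (ContinuousLinearMap.fst ℝ ℝ ℝ).hasTemperateGrowth
  refine ⟨SchwartzMap.smulLeftCLM ℂ (fun p : ℝ × ℝ => u p.1) h, fun p => ?_⟩
  rw [SchwartzMap.smulLeftCLM_apply_apply hut, smul_eq_mul]
  by_cases hp : R < |p.1|
  · simp [hR p hp]
  · have hb : b p.1 = 1 := by
      refine b.one_of_mem_closedBall ?_
      rw [mem_closedBall_zero_iff, Real.norm_eq_abs]
      show |p.1| ≤ |R| + 1
      linarith [le_abs_self R, not_lt.1 hp]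
    simp [u, hb]

theorem differentiable_planeWaves_extension (h : SchwartzMap (ℝ × ℝ) ℂ) {R : ℝ}
    (hR : ∀ p : ℝ × ℝ, R < |p.1| → h p = 0) (x1 : ℝ) :
    Differentiable ℂ fun z : ℂ => (2 * Real.pi)⁻¹ • ∫ p : ℝ × ℝ,
      Complex.exp (Complex.I * ((p.1 : ℂ) * z + (p.2 : ℂ) * (x1 : ℂ))) * h p := by
  intro z₀
  simp only [Complex.real_smul]
  refine DifferentiableAt.const_mul ?_ _
  have hc := h.continuous
  have hi := h.prodDecay.integrable hc
  have hexp : ∀ (p : ℝ × ℝ) (z : ℂ), |p.1| ≤ R → z ∈ Metric.ball z₀ 1 →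
      ‖Complex.exp (Complex.I * ((p.1 : ℂ) * z + (p.2 : ℂ) * (x1 : ℂ)))‖
        ≤ Real.exp (R * (‖z₀‖ + 1)) := by
    intro p z hp hz
    rw [Complex.norm_exp]
    gcongr
    have hz' : ‖z‖ ≤ ‖z₀‖ + 1 := by
      have := norm_le_norm_add_norm_sub' z z₀
      rw [mem_ball_iff_norm] at hz
      linarith
    simp only [Complex.mul_re, Complex.I_re, Complex.I_im, Complex.add_im, Complex.mul_im,
      Complex.ofReal_re, Complex.ofReal_im, zero_mul, mul_zero, add_zero, one_mul, zero_sub]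
    calc -(p.1 * z.im) ≤ |p.1 * z.im| := neg_le_abs _
      _ = |p.1| * |z.im| := abs_mul _ _
      _ ≤ R * (‖z₀‖ + 1) := mul_le_mul hp ((Complex.abs_im_le_norm z).trans hz')
          (abs_nonneg _) ((abs_nonneg _).trans hp)
  refine (hasDerivAt_integral_of_dominated_loc_of_deriv_le
    (F := fun z (p : ℝ × ℝ) =>
      Complex.exp (Complex.I * ((p.1 : ℂ) * z + (p.2 : ℂ) * (x1 : ℂ))) * h p)
    (F' := fun z (p : ℝ × ℝ) =>
      Complex.exp (Complex.I * ((p.1 : ℂ) * z + (p.2 : ℂ) * (x1 : ℂ)))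
        * (Complex.I * (p.1 : ℂ)) * h p)
    (bound := fun p => Real.exp (R * (‖z₀‖ + 1)) * R * ‖h p‖)
    (Metric.ball_mem_nhds z₀ one_pos) (.of_forall fun z => ?_) ?_ ?_
    (.of_forall fun p z hz => ?_) (hi.norm.const_mul _)
    (.of_forall fun p z _ => ?_)).2.differentiableAt
  · exact Continuous.aestronglyMeasurable (by fun_prop)
  · refine (hi.norm.const_mul (Real.exp (R * (‖z₀‖ + 1)))).mono'
      (Continuous.aestronglyMeasurable (by fun_prop)) (.of_forall fun p => ?_)
    by_cases hp : R < |p.1|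
    · simp [hR p hp]
    · rw [norm_mul]
      gcongr
      exact hexp p z₀ (not_lt.1 hp) (Metric.mem_ball_self one_pos)
  · exact Continuous.aestronglyMeasurable (by fun_prop)
  · by_cases hp : R < |p.1|
    · simp [hR p hp]
    · simp only [norm_mul, Complex.norm_I, one_mul, Complex.norm_real, Real.norm_eq_abs]
      gcongr
      · exact hexp p z (not_lt.1 hp) hz
      · exact not_lt.1 hp
  · refine HasDerivAt.mul_const (HasDerivAt.cexp ?_) _
    simpa using ((((hasDerivAt_id z).const_mul (p.1 : ℂ)).add_const _).const_mul Complex.I)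

theorem Differentiable.eq_of_eq_on_real {F G : ℂ → ℂ} (hF : Differentiable ℂ F)
    (hG : Differentiable ℂ G) (hFG : ∀ t : ℝ, F t = G t) : F = G := by
  refine AnalyticOnNhd.eq_of_frequently_eq (z₀ := 0) (fun z _ => hF.analyticAt z)
    (fun z _ => hG.analyticAt z) ?_
  have ht : Filter.Tendsto (fun t : ℝ => (t : ℂ)) (nhdsWithin 0 {0}ᶜ) (nhdsWithin 0 {0}ᶜ) := by
    refine tendsto_nhdsWithin_of_tendsto_nhds_of_eventually_within _ ?_ ?_
    · exact (Complex.continuous_ofReal.tendsto' 0 0 (by simp)).mono_left nhdsWithin_le_nhds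
    · filter_upwards [self_mem_nhdsWithin] with t ht
      simpa using ht
  exact ht.frequently (Filter.Frequently.of_forall hFG)

/-- The twisted trace property ω(f ⋆ g) = ω((ℰ▷g) ⋆ f), where
(ℰ▷g)(x) = g(x₀+iλ, x₁) via the entire extension of g in the first variable. -/
theorem stmt7 (lam : ℝ) (hlam : 0 < lam) (f g : ℝ × ℝ → ℂ)
    (hf : InA f) (hg : InA g)
    (gC : ℂ → ℝ → ℂ)
    (hext : ∀ x : ℝ × ℝ, gC (x.1 : ℂ) x.2 = g x)
    (hent : ∀ x1 : ℝ, Differentiable ℂ fun z => gC z x1) :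
    omegaW (sprod lam f g)
      = omegaW (sprod lam (fun x => gC ((x.1 : ℂ) + lam * Complex.I) x.2) f) := by
  obtain ⟨h, ⟨R, hR⟩, hfh⟩ := hf
  obtain ⟨k, ⟨S, hS⟩, hgk⟩ := hg
  obtain ⟨k', hk'⟩ := exists_schwartzMap_exp_mul lam k hS
  have hS' : ∀ p : ℝ × ℝ, S < |p.1| → k' p = 0 := fun p hp => by rw [hk', hS p hp, mul_zero]
  obtain rfl : f = planeWaves h := funext hfh
  obtain rfl : g = planeWaves k := funext hgk
  have hshift : (fun x : ℝ × ℝ => gC ((x.1 : ℂ) + lam * Complex.I) x.2) = planeWaves k' := by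
    ext x
    have heq := (hent x.2).eq_of_eq_on_real (differentiable_planeWaves_extension k hS x.2)
      fun t => hext (t, x.2)
    refine (congrFun heq _).trans ?_
    simp only [planeWaves, hk', ← mul_assoc, ← Complex.exp_add]
    congr 2
    ext p
    congr 2
    linear_combination (lam * p.1 : ℂ) * Complex.I_sq
  have hF0 : ∀ p : ℝ × ℝ,
      F0 (planeWaves k') p = Complex.exp (-(lam * p.1 : ℂ)) * F0 (planeWaves k) p := by
    intro p
    rw [F0_planeWaves, F0_planeWaves, partialFourier, partialFourier, ← integral_const_mul]
    refine integral_congr_ae (.of_forall fun p1 => ?_)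
    simp only [hk']
    ring
  rw [hshift, omegaW_sprod (planeWaves_prodDecay h) (planeWaves_continuous h)
    (planeWaves_prodDecay k) (planeWaves_continuous k) fun p => F0_planeWaves_eq_zero hR,
    omegaW_sprod (planeWaves_prodDecay k') (planeWaves_continuous k')
    (planeWaves_prodDecay h) (planeWaves_continuous h) fun p => F0_planeWaves_eq_zero hS',
    ← integral_neg_eq_self]
  congr 2
  ext p0
  have hsub := Measure.integral_comp_mul_left
    (fun x1 : ℝ => F0 (planeWaves h) (-p0, x1)
      * F0 (planeWaves k) (p0, Real.exp (lam * p0) * x1)) (Real.exp (-lam * p0))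
  rw [abs_of_pos (by positivity), eq_inv_smul_iff₀ (by positivity), ← integral_smul] at hsub
  simp only [neg_neg, neg_mul_neg]
  rw [← hsub]
  refine integral_congr_ae (.of_forall fun x1 => ?_)
  have hexp : Real.exp (lam * p0) * (Real.exp (-lam * p0) * x1) = x1 := by
    rw [← mul_assoc, ← Real.exp_add]
    simp
  simp only [hexp, hF0, Complex.real_smul]
  push_cast
  ring_nf
end

section
/- The deformed involution J: f ↦ f* is an antiunitary operator from the GNS Hilbert space ℋ to L²(ℝ²): it is antilinear, bijective onto a dense subspace extending to all of L²(ℝ²), and satisfies (Jf, Jg)_{L²} = (g, f)_ℋ. -/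
open MeasureTheory Complex

open scoped SchwartzMap FourierTransform

/-- The inverse Fourier transform on the plane, normalised by `(2π)⁻¹`. -/
noncomputable def planeFourierInv (h : ℝ × ℝ → ℂ) (x : ℝ × ℝ) : ℂ :=
  (2 * Real.pi)⁻¹ • ∫ p : ℝ × ℝ,
    Complex.exp (Complex.I * ((p.1 : ℂ) * (x.1 : ℂ) + (p.2 : ℂ) * (x.2 : ℂ))) * h p

/-- The inverse Fourier transform in the second variable, without normalisation. -/
noncomputable def partialFourierInv (h : ℝ × ℝ → ℂ) (x : ℝ × ℝ) : ℂ :=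
  ∫ q : ℝ, Complex.exp (Complex.I * (q : ℂ) * (x.2 : ℂ)) * h (x.1, q)

/-- The deformed involution in momentum space. -/
noncomputable def momentumStar (lam : ℝ) (h : ℝ × ℝ → ℂ) (p : ℝ × ℝ) : ℂ :=
  Real.exp (lam * p.1) • (starRingEnd ℂ) (h (-p.1, -Real.exp (lam * p.1) * p.2))

lemma norm_cexp_I_mul_mul (a b : ℝ) : ‖Complex.exp (Complex.I * a * b)‖ = 1 := by
  rw [Complex.norm_exp]; simp

lemma norm_cexp_I_mul_add (a b c d : ℝ) :
    ‖Complex.exp (Complex.I * ((a : ℂ) * b + (c : ℂ) * d))‖ = 1 := by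
  rw [Complex.norm_exp]; simp

lemma SchwartzMap.exists_norm_le_prod (h : 𝓢(ℝ × ℝ, ℂ)) :
    ∃ C : ℝ, 0 ≤ C ∧ ∀ a b : ℝ, ‖h (a, b)‖ ≤ C * (1 + a ^ 2)⁻¹ * (1 + b ^ 2)⁻¹ := by
  have key := SchwartzMap.one_add_le_sup_seminorm_apply (𝕜 := ℝ) (m := (4, 0)) le_rfl le_rfl h
  simp only [norm_iteratedFDeriv_zero] at key
  set C := 2 ^ 4 * ((Finset.Iic ((4, 0) : ℕ × ℕ)).sup
    fun m => SchwartzMap.seminorm ℝ m.1 m.2) h with hC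
  refine ⟨C, by positivity, fun a b => ?_⟩
  have ha : |a| ≤ ‖(a, b)‖ := norm_fst_le (a, b)
  have hb : |b| ≤ ‖(a, b)‖ := norm_snd_le (a, b)
  set r := ‖(a, b)‖
  have h1 : 1 + a ^ 2 ≤ (1 + r) ^ 2 := by nlinarith [abs_nonneg a, sq_abs a]
  have h2 : 1 + b ^ 2 ≤ (1 + r) ^ 2 := by nlinarith [abs_nonneg b, sq_abs b]
  have h3 : (1 + a ^ 2) * (1 + b ^ 2) ≤ (1 + r) ^ 4 := by
    calc _ ≤ (1 + r) ^ 2 * (1 + r) ^ 2 := by gcongr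
      _ = _ := by ring
  rw [mul_assoc, ← mul_inv, ← div_eq_mul_inv, le_div_iff₀ (by positivity), mul_comm]
  exact (mul_le_mul_of_nonneg_right h3 (norm_nonneg _)).trans (key (a, b))

lemma SchwartzMap.integrable_slice_left (h : 𝓢(ℝ × ℝ, ℂ)) (b : ℝ) :
    Integrable fun a : ℝ => h (a, b) := by
  obtain ⟨C, hC, hb⟩ := h.exists_norm_le_prod
  refine (integrable_inv_one_add_sq.const_mul (C * (1 + b ^ 2)⁻¹)).mono'
    (by have := h.continuous; fun_prop) (.of_forall fun a => (hb a b).trans (le_of_eq (by ring)))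

section Rescaling

/-- Rescaling the plane by `(2π)⁻¹`, landing in the Euclidean plane. -/
noncomputable def rescaleEquiv : (ℝ × ℝ) ≃L[ℝ] WithLp 2 (ℝ × ℝ) :=
  (ContinuousLinearEquiv.smulLeft (M₁ := ℝ × ℝ)
    (Units.mk0 (2 * Real.pi)⁻¹ (inv_ne_zero Real.two_pi_pos.ne'))).trans
    (WithLp.prodContinuousLinearEquiv 2 ℝ ℝ ℝ).symm

lemma rescaleEquiv_apply (x : ℝ × ℝ) :
    rescaleEquiv x = WithLp.toLp 2 ((2 * Real.pi)⁻¹ • x) := rfl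

lemma planeFourierInv_eq_fourierInv (k : 𝓢(WithLp 2 (ℝ × ℝ), ℂ)) (x : ℝ × ℝ) :
    planeFourierInv (fun p => k (WithLp.toLp 2 p)) x
      = (2 * Real.pi)⁻¹ • (𝓕⁻ k) (rescaleEquiv x) := by
  rw [SchwartzMap.fourierInv_coe, Real.fourierInv_eq', planeFourierInv]
  congr 1
  rw [← (WithLp.volume_preserving_toLp ℝ ℝ).integral_comp
    (MeasurableEquiv.toLp 2 (ℝ × ℝ)).measurableEmbedding]
  congr 1 with p
  rw [smul_eq_mul]
  congr 2
  rw [rescaleEquiv_apply, WithLp.prod_inner_apply]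
  have : (Real.pi : ℂ) ≠ 0 := by exact_mod_cast Real.pi_ne_zero
  simp
  field_simp

lemma exists_schwartz_planeFourierInv (h : 𝓢(ℝ × ℝ, ℂ)) :
    ∃ F : 𝓢(ℝ × ℝ, ℂ), ∀ x, F x = planeFourierInv h x := by
  let k : 𝓢(WithLp 2 (ℝ × ℝ), ℂ) := SchwartzMap.compCLMOfContinuousLinearEquiv ℝ
    (WithLp.prodContinuousLinearEquiv 2 ℝ ℝ ℝ) h
  refine ⟨(2 * Real.pi)⁻¹ • SchwartzMap.compCLMOfContinuousLinearEquiv ℝ rescaleEquiv (𝓕⁻ k),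
    fun x => ?_⟩
  exact (planeFourierInv_eq_fourierInv k x).symm

end Rescaling

lemma SchwartzMap.continuous_partialFourierInv (h : 𝓢(ℝ × ℝ, ℂ)) :
    Continuous (partialFourierInv h) := by
  obtain ⟨C, hC, hb⟩ := h.exists_norm_le_prod
  have := h.continuous
  refine continuous_of_dominated (bound := fun q => C * (1 + q ^ 2)⁻¹)
    (fun x => by fun_prop) (fun x => .of_forall fun q => ?_)
    (integrable_inv_one_add_sq.const_mul C) (.of_forall fun q => by fun_prop)
  rw [norm_mul, norm_cexp_I_mul_mul, one_mul]
  refine (hb x.1 q).trans ?_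
  gcongr
  exact mul_le_of_le_one_right hC (inv_le_one_of_one_le₀ (by nlinarith [sq_nonneg x.1]))

lemma SchwartzMap.integrable_partialFourierInv (h : 𝓢(ℝ × ℝ, ℂ)) (y : ℝ) :
    Integrable fun a : ℝ => partialFourierInv h (a, y) := by
  obtain ⟨C, hC, hb⟩ := h.exists_norm_le_prod
  have hc := h.continuous_partialFourierInv
  refine (integrable_inv_one_add_sq.const_mul (C * ∫ q : ℝ, (1 + q ^ 2)⁻¹)).mono'
    (by fun_prop) (.of_forall fun a => ?_)
  have : C * (∫ q : ℝ, (1 + q ^ 2)⁻¹) * (1 + a ^ 2)⁻¹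
      = ∫ q : ℝ, C * (1 + a ^ 2)⁻¹ * (1 + q ^ 2)⁻¹ := by
    rw [integral_const_mul]; ring
  rw [this]
  refine norm_integral_le_of_norm_le (integrable_inv_one_add_sq.const_mul _)
    (.of_forall fun q => ?_)
  rw [norm_mul, norm_cexp_I_mul_mul, one_mul]
  exact hb a q

lemma SchwartzMap.integrable_cexp_mul (h : 𝓢(ℝ × ℝ, ℂ)) (x : ℝ × ℝ) :
    Integrable fun p : ℝ × ℝ =>
      Complex.exp (Complex.I * ((p.1 : ℂ) * (x.1 : ℂ) + (p.2 : ℂ) * (x.2 : ℂ))) * h p := by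
  refine h.integrable.norm.mono' (by have := h.continuous; fun_prop) (.of_forall fun p => ?_)
  rw [norm_mul, norm_cexp_I_mul_add, one_mul]

lemma planeFourierInv_eq_integral_partialFourierInv (h : 𝓢(ℝ × ℝ, ℂ)) (x : ℝ × ℝ) :
    planeFourierInv h x = (2 * Real.pi)⁻¹ • ∫ p : ℝ,
      Complex.exp (Complex.I * (p : ℂ) * (x.1 : ℂ)) * partialFourierInv h (p, x.2) := by
  rw [planeFourierInv, Measure.volume_eq_prod, integral_prod _ (h.integrable_cexp_mul x)]
  congr 2 with p
  rw [partialFourierInv, ← integral_const_mul]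
  congr 1 with q
  rw [← mul_assoc, ← Complex.exp_add]
  congr 2
  ring

/-- Fourier inversion in the first variable. -/
lemma F0_planeFourierInv (h : 𝓢(ℝ × ℝ, ℂ)) :
    F0 (planeFourierInv h) = partialFourierInv h := by
  ext ⟨p, y⟩
  obtain ⟨F, hF⟩ := exists_schwartz_planeFourierInv h
  set g : ℝ → ℂ := fun a => partialFourierInv h (a, y) with hg
  have hgc : Continuous g := by have := h.continuous_partialFourierInv; fun_prop
  have hinv (t : ℝ) : 𝓕⁻ g t = (2 * Real.pi) • F (2 * Real.pi * t, y) := by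
    rw [hF, planeFourierInv_eq_integral_partialFourierInv, smul_smul,
      mul_inv_cancel₀ Real.two_pi_pos.ne', one_smul, Real.fourierInv_eq']
    congr 1 with a
    rw [smul_eq_mul]
    congr 2
    simp
    ring
  have hint : Integrable (𝓕⁻ g) := by
    simp_rw [funext hinv]
    exact ((F.integrable_slice_left y).comp_mul_left' Real.two_pi_pos.ne').smul (2 * Real.pi)
  have hfour : Integrable (𝓕 g) := by
    have : 𝓕 g = fun t => 𝓕⁻ g (-t) := by
      ext t; rw [Real.fourierInv_eq_fourier_neg, neg_neg]
    rw [this]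
    exact hint.comp_neg
  have hfin : 𝓕 (𝓕⁻ g) p = g p := by
    rw [hgc.fourier_fourierInv_eq (h.integrable_partialFourierInv y) hfour]
  have hmain : F0 (planeFourierInv h) (p, y) = 𝓕 (𝓕⁻ g) p := by
    rw [Real.fourier_eq', F0]
    have hs := Measure.integral_comp_mul_left
      (fun y0 : ℝ => Complex.exp (-Complex.I * p * y0) * F (y0, y)) (2 * Real.pi)
    simp_rw [hinv, ← hF]
    rw [abs_of_pos (by positivity), eq_inv_smul_iff₀ Real.two_pi_pos.ne', ← integral_smul] at hs
    rw [← hs]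
    congr 1 with t
    rw [smul_eq_mul, mul_smul_comm]
    congr 3
    simp
    ring
  rw [hmain, hfin]

lemma F0_conj (f : ℝ × ℝ → ℂ) (p y : ℝ) :
    F0 (fun z => (starRingEnd ℂ) (f z)) (p, y) = (starRingEnd ℂ) (F0 f (-p, y)) := by
  simp only [F0]
  rw [← integral_conj]
  congr 1 with t
  rw [map_mul, ← Complex.exp_conj]
  simp

lemma conj_partialFourierInv_eq (lam : ℝ) (h : ℝ × ℝ → ℂ) (p y : ℝ) :
    (starRingEnd ℂ) (partialFourierInv h (-p, Real.exp (-lam * p) * y))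
      = partialFourierInv (momentumStar lam h) (p, y) := by
  simp only [partialFourierInv, momentumStar]
  rw [← integral_conj]
  have hs := Measure.integral_comp_mul_left
      (fun q : ℝ => (starRingEnd ℂ) (Complex.exp (Complex.I * q * ↑(Real.exp (-lam * p) * y))
        * h (-p, q))) (-Real.exp (lam * p))
  rw [abs_inv, abs_neg, abs_of_pos (Real.exp_pos _),
    eq_inv_smul_iff₀ (Real.exp_pos _).ne', ← integral_smul] at hs
  rw [← hs]
  congr 1 with q
  rw [map_mul, ← Complex.exp_conj, mul_smul_comm]
  congr 3
  have : Complex.exp (lam * p) * Complex.exp (-(lam * p)) = 1 := by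
    rw [← Complex.exp_add]; simp
  simp [← Complex.exp_conj]
  linear_combination Complex.I * q * y * this

lemma F0_conj_planeFourierInv (lam : ℝ) (h : 𝓢(ℝ × ℝ, ℂ)) (p y : ℝ) :
    F0 (fun z => (starRingEnd ℂ) (planeFourierInv h z)) (p, Real.exp (-lam * p) * y)
      = partialFourierInv (momentumStar lam h) (p, y) := by
  rw [F0_conj, F0_planeFourierInv, conj_partialFourierInv_eq]

lemma sinv_planeFourierInv (lam : ℝ) (h k : 𝓢(ℝ × ℝ, ℂ)) (hk : ⇑k = momentumStar lam h) :
    sinv lam (planeFourierInv h) = planeFourierInv k := by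
  ext x
  simp_rw [planeFourierInv_eq_integral_partialFourierInv, sinv, F0_conj_planeFourierInv, hk]

/-- Momentum-space functions that are Schwartz and supported in a strip `|p₀| ≤ R` are preserved
by the deformed involution. -/
lemma exists_schwartz_momentumStar (lam : ℝ) (h : 𝓢(ℝ × ℝ, ℂ)) {R : ℝ}
    (hR : ∀ p : ℝ × ℝ, R < |p.1| → h p = 0) :
    ∃ k : 𝓢(ℝ × ℝ, ℂ), ⇑k = momentumStar lam h := by
  let χ : ContDiffBump (0 : ℝ) := ⟨|R| + 1, |R| + 2, by positivity, by linarith⟩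
  have hχ_one (t : ℝ) (ht : |t| ≤ R) : χ t = 1 := by
    apply χ.one_of_mem_closedBall
    rw [mem_closedBall_zero_iff, Real.norm_eq_abs]
    exact ht.trans ((le_abs_self R).trans (by simp [χ]))
  set u : ℝ → ℝ := fun t => lam * t * χ t with hu
  have hu_diff : ContDiff ℝ (⊤ : ℕ∞) u := (contDiff_const.mul contDiff_id).mul χ.contDiff
  have hu_supp : HasCompactSupport u := χ.hasCompactSupport.mul_left
  have hu_bound (t : ℝ) : -u t ≤ |lam| * (|R| + 2) := by
    refine (neg_le_abs _).trans ?_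
    by_cases ht : |t| < |R| + 2
    · rw [hu, abs_mul, abs_mul, abs_of_nonneg χ.nonneg, mul_assoc]
      gcongr
      exact (mul_le_of_le_one_right (abs_nonneg t) χ.le_one).trans ht.le
    · have : χ t = 0 := χ.zero_of_le_dist (by simpa [χ] using ht)
      simp only [hu, this, mul_zero, abs_zero]
      positivity
  set s : ℝ → ℝ := fun t => Real.exp (u t) with hs
  have hs_growth : s.HasTemperateGrowth := by
    have h1 : Function.HasTemperateGrowth fun t => Real.exp (u t) - 1 :=
      (hu_supp.comp_left (g := fun t => Real.exp t - 1) (by simp)).hasTemperateGrowth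
        ((Real.contDiff_exp.comp hu_diff).sub contDiff_const)
    simpa [Pi.add_def, hs] using h1.add (.const (1 : ℝ))
  have hs_fst : Function.HasTemperateGrowth fun p : ℝ × ℝ => s p.1 :=
    hs_growth.comp (ContinuousLinearMap.fst ℝ ℝ ℝ).hasTemperateGrowth
  have hg1 : Function.HasTemperateGrowth fun p : ℝ × ℝ => p.1 :=
    (ContinuousLinearMap.fst ℝ ℝ ℝ).hasTemperateGrowth
  have hg2 : Function.HasTemperateGrowth fun p : ℝ × ℝ => p.2 :=
    (ContinuousLinearMap.snd ℝ ℝ ℝ).hasTemperateGrowth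
  have hg : Function.HasTemperateGrowth fun p : ℝ × ℝ => (-p.1, -s p.1 * p.2) := by
    have := ((ContinuousLinearMap.inl ℝ ℝ ℝ).hasTemperateGrowth.comp hg1.neg).add
      ((ContinuousLinearMap.inr ℝ ℝ ℝ).hasTemperateGrowth.comp (hs_fst.neg.mul hg2))
    convert this using 1
    ext p <;> simp
  have hg_upper : ∃ (k : ℕ) (C : ℝ), ∀ x : ℝ × ℝ,
      ‖x‖ ≤ C * (1 + ‖((-x.1, -s x.1 * x.2) : ℝ × ℝ)‖) ^ k := by
    refine ⟨1, Real.exp (|lam| * (|R| + 2)), fun x => ?_⟩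
    set M := Real.exp (|lam| * (|R| + 2))
    have hM : 1 ≤ M := Real.one_le_exp (by positivity)
    have h1 := norm_fst_le ((-x.1, -s x.1 * x.2) : ℝ × ℝ)
    have h2 := norm_snd_le ((-x.1, -s x.1 * x.2) : ℝ × ℝ)
    set r := ‖((-x.1, -s x.1 * x.2) : ℝ × ℝ)‖
    simp only [norm_neg, norm_mul] at h1 h2
    have hr : 0 ≤ r := (norm_nonneg _).trans h1
    rw [pow_one]
    refine norm_prod_le_iff.2 ⟨?_, ?_⟩
    · nlinarith
    · have h3 : Real.exp (-u x.1) * ‖s x.1‖ = 1 := by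
        rw [Real.norm_of_nonneg (Real.exp_pos _).le, ← Real.exp_add]; simp
      calc ‖x.2‖ = Real.exp (-u x.1) * (‖s x.1‖ * ‖x.2‖) := by rw [← mul_assoc, h3, one_mul]
        _ ≤ M * (1 + r) := by
          gcongr
          · exact Real.exp_le_exp.2 (hu_bound _)
          · linarith
  refine ⟨SchwartzMap.smulLeftCLM ℂ (fun p : ℝ × ℝ => s p.1)
    (SchwartzMap.postcompCLM (𝕜 := ℝ) Complex.conjCLE.toContinuousLinearMap
      (SchwartzMap.compCLM ℝ hg hg_upper h)), ?_⟩
  ext p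
  rw [SchwartzMap.smulLeftCLM_apply_apply hs_fst, SchwartzMap.postcompCLM_apply,
    SchwartzMap.compCLM_apply, momentumStar]
  by_cases hp : |p.1| ≤ R
  · have : s p.1 = Real.exp (lam * p.1) := by simp [hs, hu, hχ_one _ hp]
    simp [this]
  · rw [Function.comp_apply, hR (-p.1, -s p.1 * p.2) (by simpa using hp),
      hR (-p.1, _) (by simpa using hp)]
    simp

lemma momentumStar_eq_zero {lam R : ℝ} {h : ℝ × ℝ → ℂ}
    (hR : ∀ p : ℝ × ℝ, R < |p.1| → h p = 0) (p : ℝ × ℝ) (hp : R < |p.1|) :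
    momentumStar lam h p = 0 := by
  rw [momentumStar, hR _ (by simpa using hp), map_zero, smul_zero]

lemma momentumStar_momentumStar (lam : ℝ) (h : ℝ × ℝ → ℂ) :
    momentumStar lam (momentumStar lam h) = h := by
  ext p
  have : Real.exp (lam * p.1) * Real.exp (-(lam * p.1)) = 1 := by
    rw [← Real.exp_add]; simp
  simp only [momentumStar, neg_neg, mul_neg, neg_mul]
  rw [Complex.real_smul, Complex.real_smul, map_mul, Complex.conj_conj, Complex.conj_ofReal,
    ← mul_assoc, ← Complex.ofReal_mul, this, ← mul_assoc, mul_comm (Real.exp (-(lam * p.1))), this]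
  simp

section Density

lemma exists_schwartz_eLpNorm_sub_planeFourierInv_lt {ψ : ℝ × ℝ → ℂ} (hψ : MemLp ψ 2)
    {ε : ℝ} (hε : 0 < ε) :
    ∃ k : 𝓢(ℝ × ℝ, ℂ), HasCompactSupport k ∧
      eLpNorm (fun x => ψ x - planeFourierInv k x) 2 < ENNReal.ofReal ε := by
  obtain ⟨c, hc⟩ : ∃ c : NNReal, Measure.map rescaleEquiv volume = c • volume := by
    have := rescaleEquiv.isAddHaarMeasure_map (volume : Measure (ℝ × ℝ))
    exact ⟨_, Measure.isAddLeftInvariant_eq_smul _ _⟩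
  obtain ⟨c', hc'⟩ : ∃ c : NNReal, Measure.map rescaleEquiv.symm volume = c • volume := by
    have := rescaleEquiv.symm.isAddHaarMeasure_map (volume : Measure (WithLp 2 (ℝ × ℝ)))
    exact ⟨_, Measure.isAddLeftInvariant_eq_smul _ _⟩
  have hemb : MeasurableEmbedding rescaleEquiv :=
    rescaleEquiv.toHomeomorph.measurableEmbedding
  have hemb' : MeasurableEmbedding rescaleEquiv.symm :=
    rescaleEquiv.symm.toHomeomorph.measurableEmbedding
  have hψ' : MemLp (ψ ∘ rescaleEquiv.symm) 2 := by
    rw [← hemb'.memLp_map_measure_iff, hc']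
    exact hψ.smul_measure ENNReal.coe_ne_top
  set d : ℝ := ((c : ENNReal) ^ (1 / (2 : ENNReal)).toReal).toReal
  have hd : (c : ENNReal) ^ (1 / (2 : ENNReal)).toReal = ENNReal.ofReal d :=
    (ENNReal.ofReal_toReal (by finiteness)).symm
  have hd0 : 0 ≤ d := ENNReal.toReal_nonneg
  have hε' : 0 < ε / (d + 1) := by positivity
  obtain ⟨g, hg_supp, hg_diff, hg⟩ := (Lp.memLp (𝓕 hψ'.toLp)).exist_eLpNorm_sub_le
    (by simp) (by simp) hε'
  set k := hg_supp.toSchwartzMap hg_diff with hk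
  have hkg : (k : WithLp 2 (ℝ × ℝ) → ℂ) = g := rfl
  have happrox : eLpNorm (fun e => ψ (rescaleEquiv.symm e) - (𝓕⁻ k) e) 2
      ≤ ENNReal.ofReal (ε / (d + 1)) := by
    have h1 : ‖𝓕 hψ'.toLp - k.toLp 2 volume‖ ≤ ε / (d + 1) := by
      rw [Lp.norm_def]
      refine ENNReal.toReal_le_of_le_ofReal hε'.le ?_
      refine le_trans (le_of_eq (eLpNorm_congr_ae ?_)) hg
      filter_upwards [Lp.coeFn_sub (𝓕 hψ'.toLp) (k.toLp 2 volume), k.coeFn_toLp 2 volume] with e h1 h2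
      rw [h1, Pi.sub_apply, Pi.sub_apply, h2, hkg]
    have hsub := map_sub (FourierTransform.fourierₗ ℂ (Lp (α := WithLp 2 (ℝ × ℝ)) ℂ 2 volume))
      hψ'.toLp (𝓕⁻ (k.toLp 2 volume))
    simp only [FourierTransform.fourierₗ_apply] at hsub
    have h2 : ‖hψ'.toLp - (𝓕⁻ k).toLp 2 volume‖ ≤ ε / (d + 1) := by
      rw [← SchwartzMap.toLp_fourierInv_eq, ← Lp.norm_fourier_eq, hsub,
        FourierTransform.fourier_fourierInv_eq]
      exact h1
    rw [Lp.norm_def, ← ENNReal.le_ofReal_iff_toReal_le (Lp.eLpNorm_ne_top _) hε'.le] at h2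
    refine le_trans (le_of_eq (eLpNorm_congr_ae ?_)) h2
    filter_upwards [Lp.coeFn_sub hψ'.toLp ((𝓕⁻ k).toLp 2 volume), (𝓕⁻ k).coeFn_toLp 2 volume,
      hψ'.coeFn_toLp] with e h1 h2 h3
    rw [h1, Pi.sub_apply, h2, h3, Function.comp_apply]
  refine ⟨SchwartzMap.compCLMOfContinuousLinearEquiv ℝ
    (WithLp.prodContinuousLinearEquiv 2 ℝ ℝ ℝ).symm ((2 * Real.pi : ℂ) • k), ?_, ?_⟩
  · exact (hg_supp.smul_left (f := fun _ => (2 * Real.pi : ℂ))).comp_homeomorph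
      (WithLp.prodContinuousLinearEquiv 2 ℝ ℝ ℝ).symm.toHomeomorph
  · have heq : (fun x => ψ x - planeFourierInv (SchwartzMap.compCLMOfContinuousLinearEquiv ℝ
        (WithLp.prodContinuousLinearEquiv 2 ℝ ℝ ℝ).symm ((2 * Real.pi : ℂ) • k)) x)
        = (fun e => ψ (rescaleEquiv.symm e) - (𝓕⁻ k) e) ∘ rescaleEquiv := by
      ext x
      rw [Function.comp_apply, ContinuousLinearEquiv.symm_apply_apply]
      congr 1
      refine (planeFourierInv_eq_fourierInv ((2 * Real.pi : ℂ) • k) x).trans ?_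
      rw [FourierTransform.fourierInv_smul, smul_apply, Complex.real_smul, smul_eq_mul]
      have : (Real.pi : ℂ) ≠ 0 := by exact_mod_cast Real.pi_ne_zero
      push_cast
      field_simp
    rw [heq, ← hemb.eLpNorm_map_measure, hc]
    change eLpNorm _ 2 ((c : ENNReal) • volume) < _
    rw [eLpNorm_smul_measure_of_ne_top (by simp), hd, smul_eq_mul]
    calc _ ≤ ENNReal.ofReal d * ENNReal.ofReal (ε / (d + 1)) := by gcongr
      _ = ENNReal.ofReal (d * (ε / (d + 1))) := (ENNReal.ofReal_mul hd0).symm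
      _ < ENNReal.ofReal ε := by
        rw [ENNReal.ofReal_lt_ofReal_iff hε, mul_div_assoc', div_lt_iff₀ (by positivity)]
        nlinarith

end Density

section Isometry

/-- A bound `C (1 + p²)⁻¹ (1 + y²)⁻¹` for a partial Fourier transform supported in a strip. -/
lemma SchwartzMap.exists_norm_partialFourierInv_le (h : 𝓢(ℝ × ℝ, ℂ)) {R : ℝ}
    (hR : ∀ p : ℝ × ℝ, R < |p.1| → h p = 0) :
    ∃ C : ℝ, 0 ≤ C ∧ ∀ p y : ℝ,
      ‖partialFourierInv h (p, y)‖ ≤ C * (1 + p ^ 2)⁻¹ * (1 + y ^ 2)⁻¹ := by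
  obtain ⟨F, hF⟩ := exists_schwartz_planeFourierInv h
  obtain ⟨C, hC, hb⟩ := F.exists_norm_le_prod
  have hI : 0 ≤ ∫ a : ℝ, (1 + a ^ 2)⁻¹ := integral_nonneg fun a => by positivity
  refine ⟨C * (∫ a : ℝ, (1 + a ^ 2)⁻¹) * (1 + R ^ 2), by positivity, fun p y => ?_⟩
  by_cases hp : R < |p|
  · have : partialFourierInv h (p, y) = 0 := by
      simp only [partialFourierInv, hR (p, _) hp, mul_zero, integral_zero]
    rw [this, norm_zero]
    positivity
  have hp1 : 1 ≤ (1 + R ^ 2) * (1 + p ^ 2)⁻¹ := by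
    rw [← div_eq_mul_inv, one_le_div (by positivity)]
    nlinarith [abs_nonneg p, sq_abs p]
  have hF0 : ‖partialFourierInv h (p, y)‖ ≤ C * (∫ a : ℝ, (1 + a ^ 2)⁻¹) * (1 + y ^ 2)⁻¹ := by
    have : C * (∫ a : ℝ, (1 + a ^ 2)⁻¹) * (1 + y ^ 2)⁻¹
        = ∫ a : ℝ, C * (1 + y ^ 2)⁻¹ * (1 + a ^ 2)⁻¹ := by
      rw [integral_const_mul]; ring
    rw [this, ← F0_planeFourierInv, F0]
    refine norm_integral_le_of_norm_le (integrable_inv_one_add_sq.const_mul _)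
      (.of_forall fun a => ?_)
    have he : ‖Complex.exp (-Complex.I * (p : ℂ) * (a : ℂ))‖ = 1 := by
      rw [Complex.norm_exp]; simp
    rw [norm_mul, he, one_mul, ← hF]
    exact (hb a y).trans (le_of_eq (by ring))
  calc _ ≤ C * (∫ a : ℝ, (1 + a ^ 2)⁻¹) * (1 + y ^ 2)⁻¹ * 1 := by rwa [mul_one]
    _ ≤ C * (∫ a : ℝ, (1 + a ^ 2)⁻¹) * (1 + y ^ 2)⁻¹ * ((1 + R ^ 2) * (1 + p ^ 2)⁻¹) := by gcongr
    _ = _ := by ring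

lemma integral_plane_integral_swap {W : (ℝ × ℝ) × ℝ → ℂ} (hW : Continuous W) {C : ℝ}
    (hb : ∀ a b p : ℝ,
      ‖W ((a, b), p)‖ ≤ C * ((1 + a ^ 2)⁻¹ * (1 + b ^ 2)⁻¹ * (1 + p ^ 2)⁻¹)) :
    ∫ x : ℝ × ℝ, ∫ p : ℝ, W (x, p) = ∫ p : ℝ, ∫ b : ℝ, ∫ a : ℝ, W ((a, b), p) := by
  have hplane : Integrable fun x : ℝ × ℝ => (1 + x.1 ^ 2)⁻¹ * (1 + x.2 ^ 2)⁻¹ :=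
    integrable_inv_one_add_sq.mul_prod integrable_inv_one_add_sq
  have hint : Integrable (Function.uncurry fun (x : ℝ × ℝ) (p : ℝ) => W (x, p))
      ((volume : Measure (ℝ × ℝ)).prod volume) :=
    ((hplane.mul_prod integrable_inv_one_add_sq).const_mul C).mono' hW.aestronglyMeasurable
      (.of_forall fun z => hb z.1.1 z.1.2 z.2)
  rw [integral_integral_swap hint]
  congr 1 with p
  have hslice : Integrable (fun x : ℝ × ℝ => W (x, p)) ((volume : Measure ℝ).prod volume) := by
    refine (hplane.const_mul (C * (1 + p ^ 2)⁻¹)).mono' (by fun_prop) (.of_forall fun x => ?_)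
    exact (hb x.1 x.2 p).trans (le_of_eq (by ring))
  rw [Measure.volume_eq_prod, integral_prod_symm _ hslice]

lemma norm_mul_mul_le_inv_prod {z v w : ℂ} {A B a b p : ℝ} (hz : ‖z‖ = 1)
    (hv : ‖v‖ ≤ A * (1 + p ^ 2)⁻¹ * (1 + b ^ 2)⁻¹) (hw : ‖w‖ ≤ B * (1 + a ^ 2)⁻¹) :
    ‖z * v * w‖ ≤ A * B * ((1 + a ^ 2)⁻¹ * (1 + b ^ 2)⁻¹ * (1 + p ^ 2)⁻¹) := by
  rw [norm_mul, norm_mul, hz, one_mul]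
  calc _ ≤ (A * (1 + p ^ 2)⁻¹ * (1 + b ^ 2)⁻¹) * (B * (1 + a ^ 2)⁻¹) :=
        mul_le_mul hv hw (norm_nonneg _) ((norm_nonneg _).trans hv)
    _ = _ := by ring

lemma SchwartzMap.exists_norm_le_inv_left (h : 𝓢(ℝ × ℝ, ℂ)) :
    ∃ C : ℝ, ∀ a b : ℝ, ‖h (a, b)‖ ≤ C * (1 + a ^ 2)⁻¹ := by
  obtain ⟨C, hC, hb⟩ := h.exists_norm_le_prod
  refine ⟨C, fun a b => (hb a b).trans ?_⟩
  exact mul_le_of_le_one_right (by positivity)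
    (inv_le_one_of_one_le₀ (by nlinarith [sq_nonneg b]))

lemma integral_conj_mul_eq_omegaW (lam : ℝ) (h a b : 𝓢(ℝ × ℝ, ℂ))
    (ha : ⇑a = momentumStar lam h) {R : ℝ} (hR : ∀ p : ℝ × ℝ, R < |p.1| → b p = 0) :
    ∫ x : ℝ × ℝ, (starRingEnd ℂ) (planeFourierInv a x) * planeFourierInv b x
      = omegaW (sprod lam (planeFourierInv b) (planeFourierInv h)) := by
  obtain ⟨u, hu⟩ := exists_schwartz_planeFourierInv a
  obtain ⟨f, hf⟩ := exists_schwartz_planeFourierInv h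
  obtain ⟨A, hA, hAb⟩ := b.exists_norm_partialFourierInv_le hR
  obtain ⟨B, hB⟩ := u.exists_norm_le_inv_left
  obtain ⟨D, hD⟩ := f.exists_norm_le_inv_left
  have hV := b.continuous_partialFourierInv
  have huc := u.continuous
  have hfc := f.continuous
  set V := partialFourierInv b with hVdef
  have hL (x : ℝ × ℝ) : (starRingEnd ℂ) (planeFourierInv a x) * planeFourierInv b x
      = (2 * Real.pi)⁻¹ • ∫ p : ℝ, Complex.exp (Complex.I * p * x.1) * V (p, x.2)
        * (starRingEnd ℂ) (u x) := by
    rw [planeFourierInv_eq_integral_partialFourierInv b, integral_mul_const, mul_smul_comm,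
      hu, mul_comm ((starRingEnd ℂ) _)]
  have hRt (x : ℝ × ℝ) : sprod lam (planeFourierInv b) (planeFourierInv h) x
      = (2 * Real.pi)⁻¹ • ∫ p : ℝ, Complex.exp (Complex.I * p * x.1) * V (p, x.2)
        * f (x.1, Real.exp (-lam * p) * x.2) := by
    simp only [sprod, F0_planeFourierInv, hf, hVdef]
  simp_rw [omegaW, hL, hRt, integral_smul]
  congr 1
  rw [integral_plane_integral_swap (W := fun z => Complex.exp (Complex.I * z.2 * z.1.1)
      * V (z.2, z.1.2) * (starRingEnd ℂ) (u z.1)) (by fun_prop)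
      (fun s t p => norm_mul_mul_le_inv_prod (norm_cexp_I_mul_mul _ _) (hAb p t)
        (by simpa using hB s t)),
    integral_plane_integral_swap (W := fun z => Complex.exp (Complex.I * z.2 * z.1.1)
      * V (z.2, z.1.2) * f (z.1.1, Real.exp (-lam * z.2) * z.1.2)) (by fun_prop)
      (fun s t p => norm_mul_mul_le_inv_prod (norm_cexp_I_mul_mul _ _) (hAb p t) (hD s _))]
  congr 1 with p
  congr 1 with y
  have hu0 : ∫ t : ℝ, Complex.exp (Complex.I * p * t) * (starRingEnd ℂ) (u (t, y))
      = (starRingEnd ℂ) (partialFourierInv a (p, y)) := by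
    rw [← F0_planeFourierInv, F0, ← integral_conj]
    congr 1 with t
    rw [map_mul, ← Complex.exp_conj, hu]
    simp
  have hf0 : ∫ t : ℝ, Complex.exp (Complex.I * p * t) * f (t, Real.exp (-lam * p) * y)
      = partialFourierInv h (-p, Real.exp (-lam * p) * y) := by
    rw [← F0_planeFourierInv, F0]
    congr 1 with t
    rw [hf]
    simp
  rw [ha, ← conj_partialFourierInv_eq, Complex.conj_conj] at hu0
  simp_rw [mul_right_comm _ (V (p, y)), integral_mul_const, hu0, hf0]

end Isometry

lemma InA.exists_schwartz {f : ℝ × ℝ → ℂ} (hf : InA f) :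
    ∃ (h : 𝓢(ℝ × ℝ, ℂ)) (R : ℝ), (∀ p : ℝ × ℝ, R < |p.1| → h p = 0) ∧
      f = planeFourierInv h := by
  obtain ⟨h, ⟨R, hR⟩, hf⟩ := hf
  exact ⟨h, R, hR, funext hf⟩

lemma planeFourierInv_smul_add (c : ℂ) (h k : 𝓢(ℝ × ℝ, ℂ)) (x : ℝ × ℝ) :
    planeFourierInv (fun p => c * h p + k p) x
      = c * planeFourierInv h x + planeFourierInv k x := by
  have hsplit (p : ℝ × ℝ) (z : ℂ) : z * (c * h p + k p) = c * (z * h p) + z * k p := by ring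
  simp only [planeFourierInv, hsplit]
  rw [integral_add ((h.integrable_cexp_mul x).const_mul c) (k.integrable_cexp_mul x),
    integral_const_mul, smul_add, mul_smul_comm]

/-- The deformed involution J : f ↦ f* is an antiunitary from the GNS Hilbert
space ℋ to L²(ℝ²): it is antilinear, it satisfies (Jf, Jg)_{L²} = (g, f)_ℋ
= ω(g* ⋆ f), and its image of 𝒜 is dense in L²(ℝ²) (so it extends to a
bijection onto all of L²). -/
theorem stmt10 (lam : ℝ) (hlam : 0 < lam) :
    (∀ f g : ℝ × ℝ → ℂ, ∀ c : ℂ, InA f → InA g →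
      sinv lam (fun x => c * f x + g x)
        = fun x => (starRingEnd ℂ) c * sinv lam f x + sinv lam g x) ∧
    (∀ f g : ℝ × ℝ → ℂ, InA f → InA g →
      ∫ x : ℝ × ℝ, (starRingEnd ℂ) (sinv lam f x) * sinv lam g x
        = omegaW (sprod lam (sinv lam g) f)) ∧
    (∀ ψ : Lp ℂ 2 (volume : Measure (ℝ × ℝ)), ∀ ε : ℝ, 0 < ε →
      ∃ f : ℝ × ℝ → ℂ, InA f ∧
        eLpNorm (fun x => (ψ : ℝ × ℝ → ℂ) x - sinv lam f x) 2 volume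
          < ENNReal.ofReal ε) := by
  refine ⟨?_, ?_, ?_⟩
  · intro f g c hf hg
    obtain ⟨h, R, hR, rfl⟩ := hf.exists_schwartz
    obtain ⟨k, S, hS, rfl⟩ := hg.exists_schwartz
    obtain ⟨h', hh'⟩ := exists_schwartz_momentumStar lam h hR
    obtain ⟨k', hk'⟩ := exists_schwartz_momentumStar lam k hS
    have hsum : (fun x => c * planeFourierInv h x + planeFourierInv k x)
        = planeFourierInv (c • h + k : 𝓢(ℝ × ℝ, ℂ)) :=
      funext fun x => (planeFourierInv_smul_add c h k x).symm
    have hstar : ⇑((starRingEnd ℂ) c • h' + k' : 𝓢(ℝ × ℝ, ℂ))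
        = momentumStar lam (c • h + k : 𝓢(ℝ × ℝ, ℂ)) := by
      ext p
      simp only [add_apply, smul_apply, hh', hk', momentumStar, smul_eq_mul,
        map_add, map_mul, smul_add, mul_smul_comm]
    rw [hsum, sinv_planeFourierInv lam _ _ hstar, sinv_planeFourierInv lam h h' hh',
      sinv_planeFourierInv lam k k' hk']
    exact funext fun x => planeFourierInv_smul_add _ h' k' x
  · intro f g hf hg
    obtain ⟨h, R, hR, rfl⟩ := hf.exists_schwartz
    obtain ⟨k, S, hS, rfl⟩ := hg.exists_schwartz
    obtain ⟨h', hh'⟩ := exists_schwartz_momentumStar lam h hR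
    obtain ⟨k', hk'⟩ := exists_schwartz_momentumStar lam k hS
    rw [sinv_planeFourierInv lam h h' hh', sinv_planeFourierInv lam k k' hk']
    exact integral_conj_mul_eq_omegaW lam h h' k' hh' (hk' ▸ momentumStar_eq_zero hS)
  · intro ψ ε hε
    obtain ⟨k, hk, hψk⟩ := exists_schwartz_eLpNorm_sub_planeFourierInv_lt (Lp.memLp ψ) hε
    obtain ⟨R, hR⟩ := hk.isCompact.isBounded.exists_norm_le
    have hkR (p : ℝ × ℝ) (hp : R < |p.1|) : k p = 0 := by
      by_contra hne
      exact absurd ((norm_fst_le p).trans (hR p (subset_tsupport _ hne))) (not_le.2 hp)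
    obtain ⟨h, hh⟩ := exists_schwartz_momentumStar lam k hkR
    refine ⟨planeFourierInv h, ⟨h, ⟨R, hh ▸ momentumStar_eq_zero hkR⟩, fun _ => rfl⟩, ?_⟩
    rwa [sinv_planeFourierInv lam h k (by rw [hh, momentumStar_momentumStar])]
end
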